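/- Let E be a finite-dimensional complex inner product space, M a natural number, and (A_m)_{m∈ℤ} a family of linear operators on E with A_m = 0 whenever |m| > M. For integers p ≤ q, let 𝒯 be the block-Toeplitz operator on the Hilbert space of functions Φ : {p, p+1, …, q} → E with the ℓ² inner product, defined by (𝒯Φ)(l) = ∑_{l'=p}^{q} A_{l−l'} Φ(l'). Then the operator norm of 𝒯 satisfies ‖𝒯‖ ≤ sup_{θ ∈ [0, 2π]} ‖∑_{m∈ℤ} A_m e^{i m θ}‖, where the norm on the right is the operator norm on E. -/

import Mathlib

/-!
`𝒯` is a compression of convolution by `A` on finitely supported sequences. Convolution multiplies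
trigonometric polynomials by the symbol `θ ↦ ∑ m, e^{imθ} A m`, so the bound is an instance of
Plancherel. All frequencies involved are finitely many, hence distinct modulo a large `N`, and the
discrete Plancherel identity on the sampling points `2πk/N` replaces the one on the circle.
-/

noncomputable section

variable {E : Type*} [NormedAddCommGroup E] [InnerProductSpace ℂ E] [FiniteDimensional ℂ E]

/-- `δ_i v`: the function equal to `v` at `i` and `0` elsewhere, as a continuous linear map. -/
def inclCLM {ι : Type*} [Fintype ι] [DecidableEq ι] (i : ι) :
    E →L[ℂ] PiLp 2 (fun _ : ι => E) :=
  LinearMap.toContinuousLinearMap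
    (((WithLp.linearEquiv 2 ℂ (∀ _ : ι, E)).symm.toLinearMap).comp
      (LinearMap.single ℂ (fun _ : ι => E) i))

/-- Evaluation at index `i`, as a continuous linear map. -/
def projCLM {ι : Type*} [Fintype ι] [DecidableEq ι] (i : ι) :
    PiLp 2 (fun _ : ι => E) →L[ℂ] E :=
  PiLp.proj 2 (fun _ : ι => E) i

/-- The operator on the `ℓ²` space of functions `ι → E` with operator-valued matrix
entries `A i j`, i.e. `(matOp A Φ)(i) = ∑ j, A i j (Φ j)`. -/
def matOp {ι : Type*} [Fintype ι] [DecidableEq ι] (A : ι → ι → (E →L[ℂ] E)) :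
    PiLp 2 (fun _ : ι => E) →L[ℂ] PiLp 2 (fun _ : ι => E) :=
  ∑ i : ι, ∑ j : ι, (inclCLM i).comp ((A i j).comp (projCLM j))

section TrigPoly

open Complex
open scoped Pointwise

/-- The trigonometric polynomial `∑ m ∈ s, e^{imθ} a m` with coefficients in a complex vector
space. With operator coefficients it is the symbol of a Toeplitz operator. -/
def trigPoly {V : Type*} [AddCommMonoid V] [Module ℂ V] (s : Finset ℤ) (a : ℤ → V) (θ : ℝ) : V :=
  ∑ m ∈ s, exp (I * m * θ) • a m

theorem continuous_trigPoly {V : Type*} [AddCommMonoid V] [Module ℂ V] [TopologicalSpace V]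
    [ContinuousAdd V] [ContinuousSMul ℂ V] (s : Finset ℤ) (a : ℤ → V) :
    Continuous (trigPoly s a) := by
  unfold trigPoly
  fun_prop

theorem norm_trigPoly_le_iSup {X : Type*} [SeminormedAddCommGroup X] [NormedSpace ℂ X]
    (s : Finset ℤ) (a : ℤ → X) {θ : ℝ} (hθ : θ ∈ Set.Icc 0 (2 * Real.pi)) :
    ‖trigPoly s a θ‖ ≤ ⨆ θ : Set.Icc (0 : ℝ) (2 * Real.pi), ‖trigPoly s a θ‖ :=
  le_ciSup (f := fun θ : Set.Icc (0 : ℝ) (2 * Real.pi) ↦ ‖trigPoly s a θ‖)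
    (isCompact_range ((continuous_trigPoly s a).norm.comp continuous_subtype_val)).bddAbove ⟨θ, hθ⟩

theorem trigPoly_apply_trigPoly {V W : Type*} [AddCommMonoid V] [Module ℂ V] [TopologicalSpace V]
    [AddCommMonoid W] [Module ℂ W] [TopologicalSpace W] [ContinuousAdd W] [ContinuousConstSMul ℂ W]
    {s t u : Finset ℤ} {A : ℤ → V →L[ℂ] W} (hA : ∀ m ∉ s, A m = 0) (hu : s + t ⊆ u)
    (x : ℤ → V) (θ : ℝ) :
    trigPoly s A θ (trigPoly t x θ) = trigPoly u (fun n ↦ ∑ l ∈ t, A (n - l) (x l)) θ := by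
  simp only [trigPoly, Finset.smul_sum, map_sum]
  rw [Finset.sum_comm]
  refine Finset.sum_congr rfl fun l hl ↦ ?_
  have shift_subset : s.map (addRightEmbedding l) ⊆ u := fun n hn ↦ by
    obtain ⟨m, hm, rfl⟩ := Finset.mem_map.1 hn
    exact hu (Finset.add_mem_add hm hl)
  have vanish_off_shift : ∀ n ∈ u, n ∉ s.map (addRightEmbedding l) →
      exp (I * n * θ) • A (n - l) (x l) = 0 := fun n _ hn ↦ by
    have hnl : n - l ∉ s := fun h ↦ hn (Finset.mem_map.2 ⟨n - l, h, sub_add_cancel n l⟩)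
    rw [hA _ hnl, zero_apply, smul_zero]
  rw [← Finset.sum_subset shift_subset vanish_off_shift, Finset.sum_map, sum_apply]
  refine Finset.sum_congr rfl fun m _ ↦ ?_
  rw [smul_apply, map_smul, smul_smul, ← exp_add, addRightEmbedding_apply, add_sub_cancel_right]
  push_cast
  ring_nf

theorem inner_trigPoly_trigPoly {V : Type*} [SeminormedAddCommGroup V] [InnerProductSpace ℂ V]
    (s t : Finset ℤ) (x y : ℤ → V) (θ : ℝ) :
    inner ℂ (trigPoly s x θ) (trigPoly t y θ) =
      ∑ m ∈ s, ∑ n ∈ t, exp (I * (n - m : ℤ) * θ) * inner ℂ (x m) (y n) := by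
  simp only [trigPoly, sum_inner, inner_sum]
  rw [Finset.sum_comm]
  refine Finset.sum_congr rfl fun m _ ↦ Finset.sum_congr rfl fun n _ ↦ ?_
  rw [inner_smul_left, inner_smul_right, ← mul_assoc, ← exp_conj, ← exp_add]
  simp only [map_mul, conj_I, conj_ofReal, map_intCast]
  push_cast
  ring_nf

/-- The angle `2πk/N ∈ [0, 2π)` attached to a residue class `k` modulo `N`: the sampling points of
the discrete Plancherel identity. -/
def sampleAngle {N : ℕ} (k : ZMod N) : ℝ :=
  2 * Real.pi * k.val / N

section Sampling

variable {N : ℕ} [NeZero N]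

theorem sampleAngle_mem_Icc (k : ZMod N) : sampleAngle k ∈ Set.Icc 0 (2 * Real.pi) := by
  have hN : (0 : ℝ) < N := Nat.cast_pos.2 (NeZero.pos N)
  refine ⟨by unfold sampleAngle; positivity, (div_le_iff₀ hN).2 ?_⟩
  gcongr
  exact k.val_le

theorem exp_sampleAngle (d : ℤ) (k : ZMod N) :
    exp (I * d * sampleAngle k) = ZMod.stdAddChar (k * (d : ZMod N)) := by
  have hk : k * (d : ZMod N) = ((k.val * d : ℤ) : ZMod N) := by
    rw [Int.cast_mul, Int.cast_natCast, ZMod.natCast_zmod_val]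
  rw [hk, ZMod.stdAddChar_coe, sampleAngle]
  push_cast
  ring_nf

theorem sum_exp_sampleAngle (d : ℤ) :
    ∑ k : ZMod N, exp (I * d * sampleAngle k) = if (d : ZMod N) = 0 then (N : ℂ) else 0 := by
  simp only [exp_sampleAngle, AddChar.sum_mulShift _ (ZMod.isPrimitive_stdAddChar N), ZMod.card,
    Nat.cast_ite, Nat.cast_zero]

variable {V : Type*} [SeminormedAddCommGroup V] [InnerProductSpace ℂ V] {s : Finset ℤ}

theorem sum_inner_trigPoly_sampleAngle (hs : Set.InjOn (Int.cast : ℤ → ZMod N) s) (x y : ℤ → V) :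
    ∑ k : ZMod N, inner ℂ (trigPoly s x (sampleAngle k)) (trigPoly s y (sampleAngle k)) =
      N * ∑ n ∈ s, inner ℂ (x n) (y n) := by
  simp only [inner_trigPoly_trigPoly]
  rw [Finset.sum_comm, Finset.mul_sum]
  refine Finset.sum_congr rfl fun m hm ↦ ?_
  rw [Finset.sum_comm]
  simp only [← Finset.sum_mul, sum_exp_sampleAngle]
  simp only [Int.cast_sub, sub_eq_zero]
  rw [Finset.sum_eq_single_of_mem m hm fun n hn hnm ↦ ?_, if_pos rfl]
  rw [if_neg fun h ↦ hnm (hs hn hm h), zero_mul]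

theorem sum_norm_sq_trigPoly_sampleAngle (hs : Set.InjOn (Int.cast : ℤ → ZMod N) s) (x : ℤ → V) :
    ∑ k : ZMod N, ‖trigPoly s x (sampleAngle k)‖ ^ 2 = N * ∑ n ∈ s, ‖x n‖ ^ 2 := by
  have h := sum_inner_trigPoly_sampleAngle hs x x
  simp only [inner_self_eq_norm_sq_to_K, coe_algebraMap] at h
  exact_mod_cast h

end Sampling

end TrigPoly

theorem exists_injOn_intCast_zmod (s : Finset ℤ) :
    ∃ N : ℕ, NeZero N ∧ Set.InjOn (Int.cast : ℤ → ZMod N) s := by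
  refine ⟨2 * s.sup Int.natAbs + 1, inferInstance, fun m hm n hn hmn ↦ ?_⟩
  have hm_le : m.natAbs ≤ s.sup Int.natAbs := Finset.le_sup hm
  have hn_le : n.natAbs ≤ s.sup Int.natAbs := Finset.le_sup hn
  have h_dvd := (ZMod.intCast_eq_intCast_iff_dvd_sub m n _).1 hmn
  exact (sub_eq_zero.1 (Int.eq_zero_of_abs_lt_dvd h_dvd (by rw [abs_lt]; omega))).symm

section Toeplitz

variable {ι κ V W : Type*} [Fintype κ] [SeminormedAddCommGroup V] [SeminormedAddCommGroup W]

section NormedSpace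

variable [NormedSpace ℂ V] [NormedSpace ℂ W]

/-- The block-Toeplitz operator with blocks `A (r i - c j)`, its rows and columns placed in `ℤ` by
`r` and `c`. Separate placements include rectangular and non-contiguous truncations. -/
def blockToeplitz (A : ℤ → V →L[ℂ] W) (r : ι → ℤ) (c : κ → ℤ) :
    PiLp 2 (fun _ : κ ↦ V) →L[ℂ] PiLp 2 (fun _ : ι ↦ W) :=
  (PiLp.continuousLinearEquiv 2 ℂ fun _ : ι ↦ W).symm.toContinuousLinearMap ∘L
    (ContinuousLinearMap.pi fun i ↦ ∑ j, A (r i - c j) ∘L ContinuousLinearMap.proj j) ∘L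
      (PiLp.continuousLinearEquiv 2 ℂ fun _ : κ ↦ V).toContinuousLinearMap

theorem blockToeplitz_apply (A : ℤ → V →L[ℂ] W) (r : ι → ℤ) (c : κ → ℤ)
    (Φ : PiLp 2 fun _ : κ ↦ V) (i : ι) :
    blockToeplitz A r c Φ i = ∑ j, A (r i - c j) (Φ j) := by
  simp [blockToeplitz]

end NormedSpace

variable [InnerProductSpace ℂ V] [InnerProductSpace ℂ W]

open scoped Pointwise in
theorem sum_norm_sq_toeplitz_le {s : Finset ℤ} {A : ℤ → V →L[ℂ] W} (hA : ∀ m ∉ s, A m = 0)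
    {C : ℝ} (hC : ∀ θ ∈ Set.Icc 0 (2 * Real.pi), ‖trigPoly s A θ‖ ≤ C) (t u : Finset ℤ)
    (x : ℤ → V) :
    ∑ n ∈ u, ‖∑ l ∈ t, A (n - l) (x l)‖ ^ 2 ≤ C ^ 2 * ∑ l ∈ t, ‖x l‖ ^ 2 := by
  let y : ℤ → W := fun n ↦ ∑ l ∈ t, A (n - l) (x l)
  let w := u ∪ (s + t)
  obtain ⟨N, hN, h_inj⟩ := exists_injOn_intCast_zmod (t ∪ w)
  have sample_le (k : ZMod N) :
      ‖trigPoly w y (sampleAngle k)‖ ≤ C * ‖trigPoly t x (sampleAngle k)‖ := by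
    rw [← trigPoly_apply_trigPoly hA Finset.subset_union_right]
    exact ContinuousLinearMap.le_of_opNorm_le _ (hC _ (sampleAngle_mem_Icc k)) _
  have scaled_le : N * ∑ n ∈ w, ‖y n‖ ^ 2 ≤ N * (C ^ 2 * ∑ l ∈ t, ‖x l‖ ^ 2) := calc
    N * ∑ n ∈ w, ‖y n‖ ^ 2 = ∑ k : ZMod N, ‖trigPoly w y (sampleAngle k)‖ ^ 2 :=
      (sum_norm_sq_trigPoly_sampleAngle
        (h_inj.mono (Finset.coe_subset.2 Finset.subset_union_right)) y).symm
    _ ≤ ∑ k : ZMod N, (C * ‖trigPoly t x (sampleAngle k)‖) ^ 2 := by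
      gcongr with k
      exact sample_le k
    _ = C ^ 2 * (N * ∑ l ∈ t, ‖x l‖ ^ 2) := by
      simp only [mul_pow, ← Finset.mul_sum]
      rw [sum_norm_sq_trigPoly_sampleAngle
        (h_inj.mono (Finset.coe_subset.2 Finset.subset_union_left))]
    _ = N * (C ^ 2 * ∑ l ∈ t, ‖x l‖ ^ 2) := mul_left_comm _ _ _
  calc ∑ n ∈ u, ‖y n‖ ^ 2 ≤ ∑ n ∈ w, ‖y n‖ ^ 2 :=
        Finset.sum_le_sum_of_subset_of_nonneg Finset.subset_union_left fun _ _ _ ↦ sq_nonneg _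
    _ ≤ C ^ 2 * ∑ l ∈ t, ‖x l‖ ^ 2 :=
      le_of_mul_le_mul_left scaled_le (Nat.cast_pos.2 (NeZero.pos N))

theorem blockToeplitz_norm_le_general [Fintype ι] {s : Finset ℤ} {A : ℤ → V →L[ℂ] W}
    (hA : ∀ m ∉ s, A m = 0) (r : ι ↪ ℤ) (c : κ ↪ ℤ) :
    ‖blockToeplitz A r c‖ ≤ ⨆ θ : Set.Icc (0 : ℝ) (2 * Real.pi), ‖trigPoly s A θ‖ := by
  have bound_nonneg : 0 ≤ ⨆ θ : Set.Icc (0 : ℝ) (2 * Real.pi), ‖trigPoly s A θ‖ :=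
    Real.iSup_nonneg fun _ ↦ norm_nonneg _
  refine ContinuousLinearMap.opNorm_le_bound _ bound_nonneg fun Φ ↦ ?_
  have h := sum_norm_sq_toeplitz_le hA (fun _ ↦ norm_trigPoly_le_iSup s A)
    (Finset.univ.map c) (Finset.univ.map r) (Function.extend c Φ 0)
  simp only [Finset.sum_map, c.injective.extend_apply, ← blockToeplitz_apply,
    ← PiLp.norm_sq_eq_of_L2, ← mul_pow] at h
  exact le_of_sq_le_sq h (by positivity)

end Toeplitz

theorem matOp_eq_blockToeplitz {ι : Type*} [Fintype ι] [DecidableEq ι] (A : ℤ → E →L[ℂ] E)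
    (r : ι → ℤ) : matOp (fun i j ↦ A (r i - r j)) = blockToeplitz A r r := by
  ext Φ i
  simp [matOp, inclCLM, projCLM, blockToeplitz_apply, Pi.single_apply]

/-- **Operator-norm bound for block-Toeplitz operators.**
Let `(A_m)_{m ∈ ℤ}` be operators on `E` vanishing for `|m| > M`, and let `𝒯` be the
block-Toeplitz operator `(𝒯Φ)(l) = ∑_{l' = p}^{q} A_{l-l'} Φ(l')` on the `ℓ²` space of
functions `{p, …, q} → E`.  Then `‖𝒯‖ ≤ sup_{θ ∈ [0,2π]} ‖∑_m A_m e^{imθ}‖`. -/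
theorem blockToeplitz_norm_le (M : ℕ) (A : ℤ → E →L[ℂ] E)
    (hA : ∀ m : ℤ, (M : ℤ) < |m| → A m = 0)
    (p q : ℤ) (hpq : p ≤ q) :
    ‖matOp (fun l l' : ↥(Set.Icc p q) => A ((l : ℤ) - (l' : ℤ)))‖ ≤
      ⨆ θ : Set.Icc (0 : ℝ) (2 * Real.pi),
        ‖∑ m ∈ Finset.Icc (-(M : ℤ)) (M : ℤ),
            Complex.exp (Complex.I * (m : ℂ) * ((θ : ℝ) : ℂ)) • A m‖ := by
  have hA' (m : ℤ) (hm : m ∉ Finset.Icc (-(M : ℤ)) M) : A m = 0 :=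
    hA m (not_le.1 fun h ↦ hm (Finset.mem_Icc.2 (abs_le.1 h)))
  rw [matOp_eq_blockToeplitz A Subtype.val]
  exact blockToeplitz_norm_le_general hA' (.subtype _) (.subtype _)

end
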